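/- Let n ∈ O_K be primary and not a perfect square, and let χ̃_n be the Dirichlet character modulo 2n defined by χ̃_n = ψ_j · (·/n) when n is of type j (j = 1, 2), regarded as a Hecke character modulo 2n of trivial infinite type. Then (as an identity of meromorphic functions of s, the series on the right converging in a suitable half-plane and continuing meromorphically) L(s, χ̃_n) = N(2n)^{−s} · π^{−(1−2s)} · (Γ(1−s)/(4Γ(s))) · ∑_{0 ≠ k ∈ O_K} g(k, χ̃_n)/N(k)^{1−s}. -/

import Mathlib

open Complex Real Filter Topology
open scoped BigOperators Classical

noncomputable section

/-- The norm `N(n)` of a Gaussian integer, as a real number. -/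
def Nm (n : GaussianInt) : ℝ := ((Zsqrtd.norm n : ℤ) : ℝ)

/-- The element `1 + i` of `ℤ[i]`. -/
def ωg : GaussianInt := ⟨1, 1⟩

/-- The element `i` of `ℤ[i]`. -/
def ig : GaussianInt := ⟨0, 1⟩

/-- `n` is primary: `n ≡ 1 mod (1+i)³`. -/
def IsPrimary (n : GaussianInt) : Prop := ωg ^ 3 ∣ (n - 1)

/-- `ẽ(z) = exp(2πi(z/(2i) − z̄/(2i)))`. -/
def eT (z : ℂ) : ℂ :=
  Complex.exp (2 * (Real.pi : ℂ) * Complex.I *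
    (z / (2 * Complex.I) - (starRingEnd ℂ) z / (2 * Complex.I)))

/-- `χ a n = (a/n)` is the quadratic residue symbol of `ℤ[i]`: on odd primes `ϖ` it is
the `±1` (or `0`) value determined by `(a/ϖ) ≡ a^((N(ϖ)-1)/2) mod ϖ`, it is extended
multiplicatively in the denominator over odd elements, and equals `1` on units. -/
structure IsQuadSym (χ : GaussianInt → GaussianInt → ℤ) : Prop where
  val_prime : ∀ ϖ a : GaussianInt, Prime ϖ → ¬ ωg ∣ ϖ → ¬ ϖ ∣ a →
    (χ a ϖ = 1 ∨ χ a ϖ = -1) ∧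
      ϖ ∣ (a ^ (((Zsqrtd.norm ϖ).toNat - 1) / 2) - (χ a ϖ : GaussianInt))
  zero_of_dvd : ∀ ϖ a : GaussianInt, Prime ϖ → ϖ ∣ a → χ a ϖ = 0
  mul_den : ∀ a m n : GaussianInt, ¬ ωg ∣ m → ¬ ωg ∣ n → χ a (m * n) = χ a m * χ a n
  unit_den : ∀ a u : GaussianInt, IsUnit u → χ a u = 1

/-- `L s m = L(s, χ_m)`: the Hecke `L`-function attached to the quadratic symbol `(m/·)`,
given by its Dirichlet series over primary elements (= odd ideals) for `Re s > 1`,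
and analytic away from `s = 1`. -/
def IsHeckeL (χ : GaussianInt → GaussianInt → ℤ) (L : ℂ → GaussianInt → ℂ) : Prop :=
  (∀ (m : GaussianInt) (s : ℂ), 1 < s.re →
      L s m = ∑' n : {n : GaussianInt // IsPrimary n}, (χ m n.1 : ℂ) / (Nm n.1 : ℂ) ^ s) ∧
    ∀ m : GaussianInt, DifferentiableOn ℂ (fun s => L s m) {s : ℂ | s ≠ 1}

/-- The generalized Riemann hypothesis for the family of quadratic Hecke `L`-functions. -/
def GRHfor (L : ℂ → GaussianInt → ℂ) : Prop :=
  ∀ m : GaussianInt, m ≠ 0 → ∀ s : ℂ, 0 < s.re → s.re < 1 → L s m = 0 → s.re = 1 / 2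

/-- The absolute norm of an ideal of `ℤ[i]`, as a complex number. -/
def idN (I : Ideal GaussianInt) : ℂ := (Nat.card (GaussianInt ⧸ I) : ℂ)

/-- The Dedekind zeta function of `ℚ(i)`. -/
def IsDedekindZetaK (Z : ℂ → ℂ) : Prop :=
  (∀ s : ℂ, 1 < s.re → Z s = ∑' I : {I : Ideal GaussianInt // I ≠ ⊥}, idN I.1 ^ (-s)) ∧
    DifferentiableOn ℂ Z {s : ℂ | s ≠ 1}

/-- `ζ_K^{(2)}`: the Euler product of `ζ_K` with the factor at the prime `(1+i)` omitted. -/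
def zeta2 (Z : ℂ → ℂ) (s : ℂ) : ℂ := Z s * (1 - (2 : ℂ) ^ (-s))

/-- `P(z) = ∏_ϖ (1 + ((N(ϖ)^{z-1/2} − 1)(N(ϖ) + 1))⁻¹)`, over all primes of `ℤ[i]`. -/
def Pfun (z : ℂ) : ℂ :=
  ∏' I : {I : Ideal GaussianInt // I ≠ ⊥ ∧ I.IsPrime},
    (1 + 1 / ((idN I.1 ^ (z - 1 / 2) - 1) * (idN I.1 + 1)))

/-- The Euler product over odd primes appearing in the ratios-conjecture main term. -/
def ratioEuler (α β : ℂ) : ℂ :=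
  ∏' I : {I : Ideal GaussianInt // I ≠ ⊥ ∧ I.IsPrime ∧ (2 : GaussianInt) ∉ I},
    (1 + (idN I.1 ^ (α - β) - 1) / (idN I.1 ^ (1 + α - β) * (idN I.1 ^ (1 + α + β) - 1)))

/-- `g r n` is the quadratic Gauss sum `g(r,n) = ∑_{x mod n} (x/n) ẽ(rx/n)`:
for any complete residue system `S` modulo `n` it is given by the indicated finite sum. -/
def IsGaussSum (χ : GaussianInt → GaussianInt → ℤ) (g : GaussianInt → GaussianInt → ℂ) : Prop :=
  ∀ r n : GaussianInt, n ≠ 0 → ∀ S : Finset GaussianInt,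
    (∀ z : GaussianInt, ∃! x, x ∈ S ∧ n ∣ (z - x)) →
    g r n = ∑ x ∈ S, (χ x n : ℂ) * eT (GaussianInt.toComplex (r * x) / GaussianInt.toComplex n)

/-- A Dirichlet character modulo `q` on `ℤ[i]` (extended by zero). -/
def IsDirichletChar (q : GaussianInt) (χ : GaussianInt → ℂ) : Prop :=
  χ 1 = 1 ∧ (∀ a b : GaussianInt, χ (a * b) = χ a * χ b) ∧
    (∀ a b : GaussianInt, q ∣ (a - b) → χ a = χ b) ∧
    (∀ a : GaussianInt, IsCoprime a q → ‖χ a‖ = 1) ∧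
    (∀ a : GaussianInt, ¬ IsCoprime a q → χ a = 0)

/-- The Gauss sum `g(r,χ) = ∑_{x mod q} χ(x) ẽ(rx/q)` of a Dirichlet character modulo `q`. -/
def IsGaussSumChar (q : GaussianInt) (χ : GaussianInt → ℂ) (g : GaussianInt → ℂ) : Prop :=
  ∀ r : GaussianInt, ∀ S : Finset GaussianInt,
    (∀ z : GaussianInt, ∃! x, x ∈ S ∧ q ∣ (z - x)) →
    g r = ∑ x ∈ S, χ x * eT (GaussianInt.toComplex (r * x) / GaussianInt.toComplex q)

/-- A primary `n = a + bi` is of type 1 if `a ≡ 1, b ≡ 0 (mod 4)` (else it is of type 2). -/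
def IsTypeOne (n : GaussianInt) : Prop := n.re % 4 = 1 ∧ n.im % 4 = 0

/-- `ψ₁`, the principal character modulo `2` on `ℤ[i]`. -/
def psi1 (m : GaussianInt) : ℂ := if IsCoprime m 2 then 1 else 0

/-- `ψ₂`, the primitive quadratic character modulo `2` on `ℤ[i]`:
`ψ₂(m) = 1` for `m ≡ 1 (mod 2)`, `ψ₂(m) = −1` for `m ≡ i (mod 2)`, and `0` otherwise. -/
def psi2 (m : GaussianInt) : ℂ :=
  if (2 : GaussianInt) ∣ (m - 1) then 1 else if (2 : GaussianInt) ∣ (m - ig) then -1 else 0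

/-- `χ̃_n = ψ_j · (·/n)`, where `j` is the type of the primary element `n`. -/
def tchi (χ : GaussianInt → GaussianInt → ℤ) (n m : GaussianInt) : ℂ :=
  (if IsTypeOne n then psi1 m else psi2 m) * (χ m n : ℂ)

/-!
The values of `χ̃_n` on `ℤ[i]` are periodic modulo `2n`, so the sum of `χ̃_n(m) N(m)^{-s}` over
`ℤ[i]` is a finite combination of Epstein zeta functions of the shifted lattices `ℤ[i] + x / (2n)`.
The theta series of such a shift is a product of two even Hurwitz kernels, one per coordinate, and
multiplying their functional equations gives one relating the shift by `z` to the twist by `ẽ(kz)`;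
summing over `x` against `χ̃_n(x)` turns the twists into the Gauss sums `g(k, χ̃_n)`.

The factor `4` counts units. Each odd ideal has one primary generator, and `χ̃_n` is invariant
under `m ↦ im`: by Euler's criterion `(i/n) = (-1)^{(N(n)-1)/4}`, which is `1` exactly when `n` is
of type 1, and this sign matches `ψ_j(im) = ± ψ_j(m)`.
-/

section ProductPair

open Asymptotics

theorem isBigO_mul_sub_mul {A : Type*} [NormedCommRing A] {u v : ℝ → A} {α β : A}
    (hu : ∀ r : ℝ, (u · - α) =O[atTop] (· ^ r)) (hv : ∀ r : ℝ, (v · - β) =O[atTop] (· ^ r))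
    (r : ℝ) : (fun x => u x * v x - α * β) =O[atTop] (· ^ r) := by
  have hmul : (fun x => (u x - α) * (v x - β)) =O[atTop] (· ^ r) := by
    simpa using (hu r).mul (hv 0)
  refine ((hmul.add ((hv r).const_mul_left α)).add ((hu r).const_mul_left β)).congr_left fun x => ?_
  ring

/-- The product of two functional-equation pairs: weights add and root numbers multiply.
Local integrability, which products do not preserve, is obtained from continuity. -/
def productFEPair {A : Type*} [NormedCommRing A] [NormedAlgebra ℂ A] (P Q : WeakFEPair A)
    (hPf : ContinuousOn P.f (Set.Ioi 0)) (hPg : ContinuousOn P.g (Set.Ioi 0))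
    (hQf : ContinuousOn Q.f (Set.Ioi 0)) (hQg : ContinuousOn Q.g (Set.Ioi 0)) :
    WeakFEPair A where
  f x := P.f x * Q.f x
  g x := P.g x * Q.g x
  k := P.k + Q.k
  ε := P.ε * Q.ε
  f₀ := P.f₀ * Q.f₀
  g₀ := P.g₀ * Q.g₀
  hf_int := (hPf.mul hQf).locallyIntegrableOn measurableSet_Ioi
  hg_int := (hPg.mul hQg).locallyIntegrableOn measurableSet_Ioi
  hk := add_pos P.hk Q.hk
  hε := mul_ne_zero P.hε Q.hε
  h_feq x hx := by
    rw [P.h_feq x hx, Q.h_feq x hx, smul_mul_smul_comm, Real.rpow_add hx, ofReal_mul,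
      mul_mul_mul_comm]
  hf_top := isBigO_mul_sub_mul P.hf_top Q.hf_top
  hg_top := isBigO_mul_sub_mul P.hg_top Q.hg_top

theorem hasSum_Λ_of_hasSum_exp (P : WeakFEPair ℂ) {ι : Type*} [Countable ι] {a : ι → ℂ}
    {p : ι → ℝ} (hp : ∀ i, 0 ≤ p i)
    (hf : ∀ t : ℝ, 0 < t → HasSum (fun i => a i * rexp (-π * p i * t)) (P.f t))
    (hf₀ : HasSum (fun i => if p i = 0 then a i else 0) P.f₀) {s : ℂ} (hs : P.k < s.re)
    (hsum : Summable fun i => ‖a i‖ / p i ^ s.re) :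
    HasSum (fun i => Gammaℝ (2 * s) * a i / (p i : ℂ) ^ s) (P.Λ s) := by
  have hterms : ∀ t ∈ Set.Ioi (0 : ℝ),
      HasSum (fun i => if p i = 0 then 0 else a i * rexp (-π * p i * t)) (P.f t - P.f₀) :=
    fun t ht => ((hf t ht).sub hf₀).congr_fun fun i => by split_ifs with h <;> simp [h]
  have hmellin := hasSum_mellin_pi_mul₀ hp (P.hk.trans hs) hterms hsum
  rw [(P.hasMellin hs).2] at hmellin
  refine hmellin.congr_fun fun i => ?_
  rw [Gammaℝ_def, neg_div, mul_div_cancel_left₀ s two_ne_zero]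

end ProductPair

section GaussianTheta

open HurwitzZeta

theorem Nm_eq_normSq (m : GaussianInt) : Nm m = normSq m := GaussianInt.intCast_real_norm m

theorem Nm_pos {m : GaussianInt} (hm : m ≠ 0) : 0 < Nm m :=
  Int.cast_pos.2 (GaussianInt.norm_pos.2 hm)

/-- The coordinates of a Gaussian integer, as an isomorphism of additive groups. -/
def gaussianCoords : GaussianInt ≃+ ℤ × ℤ where
  toFun m := (m.re, m.im)
  invFun l := ⟨l.1, l.2⟩
  left_inv _ := rfl
  right_inv _ := rfl
  map_add' _ _ := rfl

instance instCountableGaussianInt : Countable GaussianInt := gaussianCoords.injective.countable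

theorem hasSum_mul_re_im {𝕜 : Type*} [RCLike 𝕜] {u v : ℤ → 𝕜} {A B : 𝕜} (hu : HasSum u A)
    (hv : HasSum v B) : HasSum (fun m : GaussianInt => u m.re * v m.im) (A * B) :=
  gaussianCoords.toEquiv.hasSum_iff.2
    (hu.mul hv (summable_mul_of_summable_norm hu.summable.norm hv.summable.norm))

theorem normSq_coe_add (m : GaussianInt) (z : ℂ) :
    normSq (m + z) = (m.re + z.re) ^ 2 + (m.im + z.im) ^ 2 := by
  simp only [normSq_apply, add_re, add_im, ← GaussianInt.intCast_re, ← GaussianInt.intCast_im,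
    sq]

theorem summable_one_div_normSq_add_rpow (z : ℂ) {σ : ℝ} (hσ : 1 < σ) :
    Summable fun m : GaussianInt => 1 / normSq (m + z) ^ σ := by
  let L : Submodule ℤ ℂ := Submodule.span ℤ (Set.range basisOneI)
  have hmem (m : GaussianInt) : (m : ℂ) ∈ L := by
    have h1 : (1 : ℂ) ∈ L := Submodule.subset_span ⟨0, by simp⟩
    have hI : I ∈ L := Submodule.subset_span ⟨1, by simp⟩
    simpa [GaussianInt.toComplex_def] using
      L.add_mem (L.smul_mem m.re h1) (L.smul_mem m.im hI)
  have hinj : Function.Injective fun m : GaussianInt => (⟨m, hmem m⟩ : L) := fun m m' h =>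
    GaussianInt.toComplex_injective (congrArg Subtype.val h)
  have hrank : Module.finrank ℤ L = 2 := by
    rw [ZLattice.rank ℝ L, finrank_real_complex]
  have hexp : -(2 * σ) < -(Module.finrank ℤ L : ℝ) := by
    rw [hrank, Nat.cast_ofNat]
    linarith
  have hsum := ZLattice.summable_norm_sub_rpow L (-(2 * σ)) hexp (-z)
  refine (hsum.comp_injective hinj).congr fun m => ?_
  simp only [Function.comp_apply, sub_neg_eq_add]
  rw [Real.rpow_neg (norm_nonneg _), Real.rpow_mul (norm_nonneg _), Real.rpow_two,
    normSq_eq_norm_sq, one_div]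

theorem eT_eq (z : ℂ) : eT z = cexp (2 * π * I * z.im) := by
  rw [eT, ← sub_div, sub_conj, mul_div_mul_right _ _ I_ne_zero, ofReal_mul, ofReal_ofNat,
    mul_div_cancel_left₀ _ two_ne_zero]

theorem norm_eT (z : ℂ) : ‖eT z‖ = 1 := by
  rw [eT_eq, show 2 * π * I * z.im = ((2 * π * z.im : ℝ) : ℂ) * I by push_cast; ring,
    norm_exp_ofReal_mul_I]

/-- The functional-equation pair of the theta series `∑ exp(-π |m + z|² t)` over `ℤ[i]`
shifted by `z`; its dual is the twisted series `∑ ẽ(m z) exp(-π |m|² t)`. -/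
def gaussianThetaPair (z : ℂ) : WeakFEPair ℂ :=
  productFEPair (hurwitzEvenFEPair z.re) (hurwitzEvenFEPair z.im)
    (continuous_ofReal.comp_continuousOn (continuousOn_evenKernel _))
    (continuous_ofReal.comp_continuousOn (continuousOn_cosKernel _))
    (continuous_ofReal.comp_continuousOn (continuousOn_evenKernel _))
    (continuous_ofReal.comp_continuousOn (continuousOn_cosKernel _))

theorem gaussianThetaPair_k (z : ℂ) : (gaussianThetaPair z).k = 1 := add_halves 1

theorem gaussianThetaPair_Λ_one_sub (z s : ℂ) :
    (gaussianThetaPair z).Λ (1 - s) = (gaussianThetaPair z).symm.Λ s := by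
  have h := (gaussianThetaPair z).functional_equation s
  rw [gaussianThetaPair_k, ofReal_one] at h
  rw [h, show (gaussianThetaPair z).ε = 1 from mul_one 1, one_smul]

theorem hasSum_gaussianThetaPair_f (z : ℂ) {t : ℝ} (ht : 0 < t) :
    HasSum (fun m : GaussianInt => (rexp (-π * normSq (m + z) * t) : ℂ))
      ((gaussianThetaPair z).f t) := by
  rw [show (gaussianThetaPair z).f t = ((evenKernel z.re t * evenKernel z.im t : ℝ) : ℂ) from
    (ofReal_mul _ _).symm, hasSum_ofReal]
  have h := hasSum_mul_re_im (hasSum_int_evenKernel z.re ht) (hasSum_int_evenKernel z.im ht)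
  refine h.congr_fun fun m => ?_
  rw [normSq_coe_add, ← Real.exp_add]
  ring_nf

theorem hasSum_gaussianThetaPair_g (z : ℂ) {t : ℝ} (ht : 0 < t) :
    HasSum (fun k : GaussianInt => eT (k * z) * rexp (-π * normSq k * t))
      ((gaussianThetaPair z).g t) := by
  have h := hasSum_mul_re_im (hasSum_int_cosKernel z.im ht) (hasSum_int_cosKernel z.re ht)
  rw [mul_comm (cosKernel z.im t : ℂ)] at h
  refine HasSum.congr_fun (a := (gaussianThetaPair z).g t) h fun k => ?_
  have hphase : (((k : ℂ) * z).im : ℂ) = z.im * k.re + z.re * k.im := by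
    rw [mul_im, ← GaussianInt.intCast_re, ← GaussianInt.intCast_im]
    push_cast
    ring
  have hnorm : normSq k = (k.re : ℝ) ^ 2 + (k.im : ℝ) ^ 2 := by
    simpa only [add_zero, zero_re, zero_im] using normSq_coe_add k 0
  rw [eT_eq, hphase, hnorm, mul_mul_mul_comm, ← Complex.exp_add, ← ofReal_mul, ← Real.exp_add]
  ring_nf

theorem hasSum_int_add_eq_zero (a : ℝ) :
    HasSum (fun n : ℤ => if n + a = 0 then (1 : ℂ) else 0) (hurwitzEvenFEPair a).f₀ := by
  have h := (hasSum_int_evenKernel a one_pos).sub (hasSum_int_evenKernel₀ a one_pos)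
  rw [sub_sub_cancel] at h
  have hcast : (hurwitzEvenFEPair a).f₀ =
      ((if (a : UnitAddCircle) = 0 then 1 else 0 : ℝ) : ℂ) := by
    rw [apply_ite ofReal, ofReal_one, ofReal_zero]
    rfl
  rw [hcast]
  refine (hasSum_ofReal.2 h).congr_fun fun n => ?_
  split_ifs with hn <;> simp [hn]

theorem hasSum_gaussianThetaPair_f₀ (z : ℂ) :
    HasSum (fun m : GaussianInt => if normSq (m + z) = 0 then (1 : ℂ) else 0)
      (gaussianThetaPair z).f₀ := by
  have h := hasSum_mul_re_im (hasSum_int_add_eq_zero z.re) (hasSum_int_add_eq_zero z.im)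
  refine h.congr_fun fun m => ?_
  rw [ite_zero_mul_ite_zero, mul_one]
  refine if_congr ?_ rfl rfl
  rw [normSq_coe_add, add_eq_zero_iff_of_nonneg (sq_nonneg _) (sq_nonneg _), sq_eq_zero_iff,
    sq_eq_zero_iff]

theorem hasSum_gaussianThetaPair_g₀ (z : ℂ) :
    HasSum (fun k : GaussianInt => if normSq k = 0 then eT (k * z) else 0)
      (gaussianThetaPair z).g₀ := by
  rw [show (gaussianThetaPair z).g₀ = 1 from mul_one 1]
  refine (hasSum_ite_eq (0 : GaussianInt) (1 : ℂ)).congr_fun fun k => ?_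
  have hiff : normSq k = 0 ↔ k = 0 := normSq_eq_zero.trans GaussianInt.toComplex_eq_zero
  simp only [hiff]
  split_ifs with hk
  · rw [hk, map_zero, zero_mul, eT_eq, zero_im, ofReal_zero, mul_zero, Complex.exp_zero]
  · rfl

theorem hasSum_gaussianThetaPair_Λ (z : ℂ) {s : ℂ} (hs : 1 < s.re) :
    HasSum (fun m : GaussianInt => Gammaℝ (2 * s) / (normSq (m + z) : ℂ) ^ s)
      ((gaussianThetaPair z).Λ s) := by
  have h := hasSum_Λ_of_hasSum_exp (gaussianThetaPair z) (a := fun _ : GaussianInt => 1)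
    (p := fun m => normSq (m + z)) (fun m => normSq_nonneg _)
    (fun t ht => by simpa only [one_mul] using hasSum_gaussianThetaPair_f z ht)
    (hasSum_gaussianThetaPair_f₀ z) (by rwa [gaussianThetaPair_k])
    (by simpa only [norm_one] using summable_one_div_normSq_add_rpow z hs)
  simpa only [mul_one] using h

theorem hasSum_gaussianThetaPair_symm_Λ (z : ℂ) {s : ℂ} (hs : 1 < s.re) :
    HasSum (fun k : GaussianInt => Gammaℝ (2 * s) * eT (k * z) / (Nm k : ℂ) ^ s)
      ((gaussianThetaPair z).symm.Λ s) := by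
  simp only [Nm_eq_normSq]
  exact hasSum_Λ_of_hasSum_exp (gaussianThetaPair z).symm (fun k => normSq_nonneg _)
    (fun t ht => hasSum_gaussianThetaPair_g z ht) (hasSum_gaussianThetaPair_g₀ z)
    ((gaussianThetaPair_k z).trans_lt hs)
    (by simpa only [norm_eT, add_zero] using summable_one_div_normSq_add_rpow 0 hs)

end GaussianTheta

section ResidueSystem

/-- `S` is a complete residue system modulo `q`: every class has exactly one representative
in `S`. -/
def IsResidueSystem {R : Type*} [CommRing R] (q : R) (S : Finset R) : Prop :=
  ∀ z, ∃! x, x ∈ S ∧ q ∣ z - x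

theorem exists_isResidueSystem {R : Type*} [CommRing R] (q : R)
    [Finite (R ⧸ Ideal.span {q})] : ∃ S, IsResidueSystem q S := by
  have := Fintype.ofFinite (R ⧸ Ideal.span {q})
  have hdvd (a b : R) : q ∣ a - b ↔ Ideal.Quotient.mk (Ideal.span {q}) a = Ideal.Quotient.mk _ b :=
    Ideal.mem_span_singleton.symm.trans (Ideal.Quotient.mk_eq_mk_iff_sub_mem a b).symm
  refine ⟨Finset.univ.image (Quotient.out : R ⧸ Ideal.span {q} → R), fun z =>
    ⟨(Ideal.Quotient.mk (Ideal.span {q}) z).out, ⟨by simp, ?_⟩, ?_⟩⟩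
  · exact (hdvd _ _).2 (Ideal.Quotient.mk_out _).symm
  · rintro x ⟨hx, hzx⟩
    obtain ⟨y, -, rfl⟩ := Finset.mem_image.1 hx
    rw [(hdvd _ _).1 hzx, Ideal.Quotient.mk_out]

theorem IsResidueSystem.hasSum {R E : Type*} [CommRing R] [IsDomain R] [AddCommMonoid E]
    [TopologicalSpace E] [ContinuousAdd E] {q : R} {S : Finset R} (hS : IsResidueSystem q S)
    (hq : q ≠ 0) {f : R → E} {a : R → E} (h : ∀ x ∈ S, HasSum (fun l => f (x + q * l)) (a x)) :
    HasSum f (∑ x ∈ S, a x) := by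
  have hclass : ∀ x ∈ S, HasSum (fun m => if q ∣ m - x then f m else 0) (a x) := by
    intro x hx
    have hinj : Function.Injective fun l => x + q * l :=
      (add_right_injective x).comp (mul_right_injective₀ hq)
    refine (hinj.hasSum_iff fun m hm => if_neg ?_).1 ((h x hx).congr_fun fun l => ?_)
    · rintro ⟨l, hl⟩
      exact hm ⟨l, (eq_add_of_sub_eq' hl).symm⟩
    · exact if_pos ⟨l, add_sub_cancel_left _ _⟩
  refine (hasSum_sum hclass).congr_fun fun m => ?_
  obtain ⟨x, ⟨hxS, hxm⟩, hunique⟩ := hS m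
  rw [Finset.sum_eq_single_of_mem x hxS fun y hyS hyx => if_neg fun hym =>
    hyx (hunique y ⟨hyS, hym⟩), if_pos hxm]

theorem finite_gaussianInt_quotient_span {q : GaussianInt} (hq : q ≠ 0) :
    Finite (GaussianInt ⧸ Ideal.span {q}) := by
  let e : GaussianInt ≃ₗ[ℤ] ℤ × ℤ := gaussianCoords.toIntLinearEquiv
  have := Module.Finite.equiv e.symm
  have := Module.Free.of_equiv e.symm
  exact Ideal.finiteQuotientOfFreeOfNeBot _ (Ideal.span_singleton_eq_bot.not.2 hq)

end ResidueSystem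

section AnalyticContinuation

theorem eqOn_compl_of_eq_of_lt_re {E : Type*} [NormedAddCommGroup E] [NormedSpace ℂ E]
    [CompleteSpace E] {P : Set ℂ} (hP : P.Finite) {f g : ℂ → E}
    (hf : DifferentiableOn ℂ f Pᶜ) (hg : DifferentiableOn ℂ g Pᶜ) {c : ℝ}
    (h : ∀ s : ℂ, c < s.re → f s = g s) : Set.EqOn f g Pᶜ := by
  have hopen : IsOpen {s : ℂ | c < s.re} := isOpen_lt continuous_const continuous_re
  have hne : {s : ℂ | c < s.re}.Nonempty := ⟨(c + 1 : ℝ), by simp⟩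
  obtain ⟨s₀, hs₀P, hs₀⟩ := (hP.countable.dense_compl ℂ).inter_open_nonempty _ hopen hne |>.imp
    fun _ => And.symm
  refine (hf.analyticOnNhd hP.isClosed.isOpen_compl).eqOn_of_preconnected_of_eventuallyEq
    (hg.analyticOnNhd hP.isClosed.isOpen_compl) ?_ hs₀P (eventually_of_mem (hopen.mem_nhds hs₀) h)
  exact (hP.countable.isConnected_compl_of_one_lt_rank
    (rank_real_complex ▸ Cardinal.one_lt_two)).isPreconnected

end AnalyticContinuation

section PeriodicDirichletSeries

/-- The completed Dirichlet series of a function `φ` on `ℤ[i]` periodic modulo `q`, assembled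
from the theta pairs shifted by `x / q`, with `x` in a complete residue system `S` modulo `q`. -/
def completedPeriodicL (q : GaussianInt) (S : Finset GaussianInt) (φ : GaussianInt → ℂ)
    (s : ℂ) : ℂ :=
  ∑ x ∈ S, φ x * (gaussianThetaPair (x / q)).Λ s

theorem Gammaℝ_two_mul_ne_zero {s : ℂ} (hs : 1 < s.re) : Gammaℝ (2 * s) ≠ 0 :=
  Gammaℝ_ne_zero_of_re_pos (by simpa using zero_lt_one.trans hs)

theorem Nm_add_mul {q : GaussianInt} (hq : q ≠ 0) (x l : GaussianInt) :
    Nm (x + q * l) = Nm q * normSq (l + x / q) := by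
  have hq' : (q : ℂ) ≠ 0 := GaussianInt.toComplex_eq_zero.not.2 hq
  rw [Nm_eq_normSq, Nm_eq_normSq, ← normSq_mul, mul_add, mul_div_cancel₀ _ hq', map_add, map_mul,
    add_comm]

theorem hasSum_completedPeriodicL {q : GaussianInt} (hq : q ≠ 0) {S : Finset GaussianInt}
    (hS : IsResidueSystem q S) {φ : GaussianInt → ℂ} (hφ : ∀ a b, q ∣ a - b → φ a = φ b)
    {s : ℂ} (hs : 1 < s.re) :
    HasSum (fun m => Gammaℝ (2 * s) * (φ m / (Nm m : ℂ) ^ s))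
      ((Nm q : ℂ) ^ (-s) * completedPeriodicL q S φ s) := by
  rw [completedPeriodicL, Finset.mul_sum]
  refine hS.hasSum hq fun x _ => ?_
  refine (((hasSum_gaussianThetaPair_Λ (x / q) hs).mul_left (φ x)).mul_left _).congr_fun fun l => ?_
  rw [hφ (x + q * l) x ⟨l, add_sub_cancel_left _ _⟩, Nm_add_mul hq, ofReal_mul,
    mul_cpow_ofReal_nonneg (Nm_pos hq).le (normSq_nonneg _), cpow_neg]
  ring

theorem summable_div_Nm_cpow_of_periodic {q : GaussianInt} (hq : q ≠ 0) {φ : GaussianInt → ℂ}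
    (hφ : ∀ a b, q ∣ a - b → φ a = φ b) {s : ℂ} (hs : 1 < s.re) :
    Summable fun m => φ m / (Nm m : ℂ) ^ s := by
  have := finite_gaussianInt_quotient_span hq
  obtain ⟨S, hS⟩ := exists_isResidueSystem q
  exact (summable_mul_left_iff (Gammaℝ_two_mul_ne_zero hs)).1
    (hasSum_completedPeriodicL hq hS hφ hs).summable

theorem hasSum_completedPeriodicL_one_sub {q : GaussianInt} {S : Finset GaussianInt}
    (hS : IsResidueSystem q S) {φ g : GaussianInt → ℂ} (hg : IsGaussSumChar q φ g)
    {s : ℂ} (hs : 1 < s.re) :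
    HasSum (fun k => Gammaℝ (2 * s) * (g k / (Nm k : ℂ) ^ s))
      (completedPeriodicL q S φ (1 - s)) := by
  simp only [completedPeriodicL, gaussianThetaPair_Λ_one_sub]
  refine (hasSum_sum fun (x : GaussianInt) _ =>
    (hasSum_gaussianThetaPair_symm_Λ (x / q) hs).mul_left (φ x)).congr_fun fun k => ?_
  rw [hg k S hS, Finset.sum_div, Finset.mul_sum]
  refine Finset.sum_congr rfl fun x _ => ?_
  rw [map_mul, ← mul_div_assoc (k : ℂ)]
  ring

theorem differentiableOn_completedPeriodicL (q : GaussianInt) (S : Finset GaussianInt)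
    (φ : GaussianInt → ℂ) : DifferentiableOn ℂ (completedPeriodicL q S φ) {0, 1}ᶜ := by
  intro s hs
  simp only [Set.mem_compl_iff, Set.mem_insert_iff, Set.mem_singleton_iff, not_or] at hs
  refine DifferentiableAt.differentiableWithinAt (.fun_sum fun x _ => .const_mul ?_ _)
  refine WeakFEPair.differentiableAt_Λ _ (Or.inl hs.1) (Or.inl ?_)
  rw [gaussianThetaPair_k]
  exact_mod_cast hs.2

theorem tsum_ne_zero_div_Nm_cpow (g : GaussianInt → ℂ) {s : ℂ} (hs : s ≠ 0) :
    ∑' k : {k : GaussianInt // k ≠ 0}, g k / (Nm k : ℂ) ^ s = ∑' k, g k / (Nm k : ℂ) ^ s := by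
  refine tsum_subtype_eq_of_support_subset (f := fun k => g k / (Nm k : ℂ) ^ s)
    (s := {k | k ≠ 0}) fun k hk h0 => hk ?_
  simp only [h0, Nm_eq_normSq, map_zero, ofReal_zero, zero_cpow hs, div_zero]

theorem Gammaℝ_two_mul_one_sub_div (s : ℂ) :
    Gammaℝ (2 * (1 - s)) / Gammaℝ (2 * s) =
      (π : ℂ) ^ (-(1 - 2 * s)) * (Complex.Gamma (1 - s) / Complex.Gamma s) := by
  have hhalf (z : ℂ) : Gammaℝ (2 * z) = (π : ℂ) ^ (-z) * Complex.Gamma z := by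
    rw [Gammaℝ_def, neg_div, mul_div_cancel_left₀ z two_ne_zero]
  rw [hhalf, hhalf, mul_div_mul_comm, ← cpow_sub _ _ (ofReal_ne_zero.2 pi_ne_zero)]
  ring_nf

theorem functionalEquation_of_periodic {q : GaussianInt} (hq : q ≠ 0) {φ g : GaussianInt → ℂ}
    (hφ : ∀ a b, q ∣ a - b → φ a = φ b) (hg : IsGaussSumChar q φ g) {D : ℂ → ℂ}
    (hD : ∀ s : ℂ, 1 < s.re → D s = ∑' m, φ m / (Nm m : ℂ) ^ s)
    (hdiff : DifferentiableOn ℂ D {s | s ≠ 1}) {s : ℂ} (hs : s.re < 0) :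
    D s = (Nm q : ℂ) ^ (-s) * (π : ℂ) ^ (-(1 - 2 * s)) *
      (Complex.Gamma (1 - s) / Complex.Gamma s) * ∑' k, g k / (Nm k : ℂ) ^ (1 - s) := by
  have := finite_gaussianInt_quotient_span hq
  obtain ⟨S, hS⟩ := exists_isResidueSystem q
  have hNq : (Nm q : ℂ) ≠ 0 := ofReal_ne_zero.2 (Nm_pos hq).ne'
  have hcont : Set.EqOn D
      (fun s => (Nm q : ℂ) ^ (-s) * completedPeriodicL q S φ s * (Gammaℝ (2 * s))⁻¹)
      {0, 1}ᶜ := by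
    refine eqOn_compl_of_eq_of_lt_re (Set.toFinite _) (hdiff.mono ?_) ?_ (c := 1) fun s hs => ?_
    · exact fun s hs h => hs (Or.inr h)
    · refine .mul (.mul ?_ (differentiableOn_completedPeriodicL q S φ)) ?_
      · exact (differentiable_neg.const_cpow (Or.inl hNq)).differentiableOn
      · exact (differentiable_Gammaℝ_inv.comp (differentiable_id.const_mul 2)).differentiableOn
    · rw [← (hasSum_completedPeriodicL hq hS hφ hs).tsum_eq, tsum_mul_left, hD s hs,
        mul_comm (Gammaℝ _),
        mul_inv_cancel_right₀ (Gammaℝ_two_mul_ne_zero hs)]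
  have hdual := (hasSum_completedPeriodicL_one_sub hS hg (s := 1 - s)
    (by rw [sub_re, one_re]; linarith)).tsum_eq
  rw [sub_sub_cancel, tsum_mul_left] at hdual
  have hs01 : s ∈ ({0, 1} : Set ℂ)ᶜ := by
    rintro (rfl | rfl)
    · exact hs.ne zero_re
    · exact absurd hs (by norm_num)
  calc D s = (Nm q : ℂ) ^ (-s) * completedPeriodicL q S φ s * (Gammaℝ (2 * s))⁻¹ := hcont hs01
    _ = (Nm q : ℂ) ^ (-s) * (Gammaℝ (2 * (1 - s)) / Gammaℝ (2 * s)) *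
        ∑' k, g k / (Nm k : ℂ) ^ (1 - s) := by rw [← hdual]; ring
    _ = _ := by rw [Gammaℝ_two_mul_one_sub_div, ← mul_assoc (_ ^ _)]

end PeriodicDirichletSeries

section Primary

theorem ωg_dvd_iff {m : GaussianInt} : ωg ∣ m ↔ (m.re + m.im) % 2 = 0 := by
  constructor
  · rintro ⟨x, rfl⟩
    simp only [ωg, Zsqrtd.re_mul, Zsqrtd.im_mul]
    lia
  · refine fun h => ⟨⟨(m.re + m.im) / 2, (m.im - m.re) / 2⟩, ?_⟩
    ext <;> simp only [ωg, Zsqrtd.re_mul, Zsqrtd.im_mul] <;> lia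

theorem ωg_pow_three : ωg ^ 3 = ⟨-2, 2⟩ := by decide

theorem isPrimary_iff {m : GaussianInt} : IsPrimary m ↔ m.im % 2 = 0 ∧ (m.re + m.im) % 4 = 1 := by
  rw [IsPrimary, ωg_pow_three]
  constructor
  · rintro ⟨x, hx⟩
    obtain ⟨hre, him⟩ := Zsqrtd.ext_iff.1 hx
    simp only [Zsqrtd.re_sub, Zsqrtd.im_sub, Zsqrtd.re_mul, Zsqrtd.im_mul, Zsqrtd.re_one,
      Zsqrtd.im_one] at hre him
    lia
  · refine fun h => ⟨⟨(m.im - m.re + 1) / 4, (1 - m.re - m.im) / 4⟩, ?_⟩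
    ext <;> simp only [Zsqrtd.re_sub, Zsqrtd.im_sub, Zsqrtd.re_mul, Zsqrtd.im_mul, Zsqrtd.re_one,
      Zsqrtd.im_one] <;> lia

theorem IsPrimary.not_ωg_dvd {m : GaussianInt} (hm : IsPrimary m) : ¬ ωg ∣ m := by
  rw [isPrimary_iff] at hm
  rw [ωg_dvd_iff]
  lia

theorem IsPrimary.ne_zero {m : GaussianInt} (hm : IsPrimary m) : m ≠ 0 :=
  fun h => hm.not_ωg_dvd (h ▸ dvd_zero ωg)

theorem re_ig_mul (m : GaussianInt) : (ig * m).re = -m.im := by simp [ig]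

theorem im_ig_mul (m : GaussianInt) : (ig * m).im = m.re := by simp [ig]

theorem Nm_ig_mul (m : GaussianInt) : Nm (ig * m) = Nm m := by
  rw [Nm, Nm, Zsqrtd.norm_mul, show ig.norm = 1 by decide, one_mul]

theorem isUnit_ig : IsUnit ig := .of_mul_eq_one ⟨0, -1⟩ rfl

theorem exists_isPrimary_ig_pow_mul_iff {m : GaussianInt} (hm : ¬ ωg ∣ m) :
    ∃ j ∈ Finset.range 4, ∀ i ∈ Finset.range 4, IsPrimary (ig ^ i * m) ↔ i = j := by
  let j : ℕ := if m.im % 2 = 0 then if (m.re + m.im) % 4 = 1 then 0 else 2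
    else if (m.re - m.im) % 4 = 1 then 1 else 3
  refine ⟨j, Finset.mem_range.2 (by grind), fun i hi => ?_⟩
  rw [ωg_dvd_iff] at hm
  rw [Finset.mem_range] at hi
  interval_cases i <;>
    simp only [isPrimary_iff, pow_succ', pow_zero, mul_one, one_mul, mul_assoc, re_ig_mul,
      im_ig_mul] <;> grind

theorem hasSum_four_nsmul_of_primary {E : Type*} [AddCommMonoid E] [TopologicalSpace E]
    [ContinuousAdd E] {f : GaussianInt → E} (hunit : ∀ m, f (ig * m) = f m)
    (heven : ∀ m, ωg ∣ m → f m = 0) {a : E}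
    (h : HasSum (fun m : {m // IsPrimary m} => f m) a) : HasSum f (4 • a) := by
  have hpow (j : ℕ) (m : GaussianInt) : f (ig ^ j * m) = f m := by
    induction j with
    | zero => rw [pow_zero, one_mul]
    | succ j ih => rw [pow_succ', mul_assoc, hunit, ih]
  have hind : HasSum ({m | IsPrimary m}.indicator f) a := hasSum_subtype_iff_indicator.1 h
  have htranslate : ∀ j ∈ Finset.range 4,
      HasSum (fun m => {m | IsPrimary m}.indicator f (ig ^ j * m)) a := fun j _ =>
    ((isUnit_ig.pow j).unit.mulLeft.hasSum_iff.2 hind).congr_fun fun m => by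
      rw [Function.comp_apply, Units.mulLeft_apply, IsUnit.unit_spec]
  have hsum := hasSum_sum htranslate
  rw [Finset.sum_const, Finset.card_range] at hsum
  refine hsum.congr_fun fun m => ?_
  simp only [Set.indicator_apply, Set.mem_ofPred_eq, hpow]
  by_cases hm : ωg ∣ m
  · simp only [heven m hm, ite_self, Finset.sum_const_zero]
  · obtain ⟨j, hj, hprimary⟩ := exists_isPrimary_ig_pow_mul_iff hm
    rw [Finset.sum_congr rfl fun i hi => if_congr (hprimary i hi) rfl rfl,
      Finset.sum_ite_eq' _ j, if_pos hj]

end Primary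

section QuadraticSymbol

theorem prime_factorization_induction_of_not_dvd {M : Type*} [CommMonoidWithZero M]
    [UniqueFactorizationMonoid M] {c : M} {P : M → Prop} (unit : ∀ u, IsUnit u → P u)
    (prime_mul : ∀ p m, Prime p → ¬ c ∣ p → ¬ c ∣ m → P m → P (p * m)) {m : M} (hm : ¬ c ∣ m) :
    P m := by
  induction m using UniqueFactorizationMonoid.induction_on_prime with
  | h₁ => exact absurd (dvd_zero c) hm
  | h₂ u hu => exact unit u hu
  | h₃ m p _ hp ih =>
    have hcm : ¬ c ∣ m := fun h => hm (h.mul_left p)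
    exact prime_mul p m hp (fun h => hm (h.mul_right m)) hcm (ih hcm)

theorem norm_emod_four_of_not_ωg_dvd {m : GaussianInt} (hm : ¬ ωg ∣ m) : m.norm % 4 = 1 := by
  rw [ωg_dvd_iff] at hm
  rw [Zsqrtd.norm_def]
  obtain ⟨a, ha | ha⟩ := m.re.even_or_odd' <;> obtain ⟨b, hb | hb⟩ := m.im.even_or_odd' <;>
    rw [ha, hb] at hm ⊢ <;> ring_nf <;> lia

theorem IsPrimary.norm_emod_eight_eq_one_iff {n : GaussianInt} (hn : IsPrimary n) :
    n.norm % 8 = 1 ↔ IsTypeOne n := by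
  obtain ⟨him, hadd⟩ := isPrimary_iff.1 hn
  obtain ⟨b, hb⟩ := Int.dvd_of_emod_eq_zero him
  obtain ⟨c, hc⟩ : ∃ c, n.re = 1 - 2 * b + 4 * c :=
    ⟨(n.re + n.im - 1) / 4, by lia⟩
  have hnorm : n.norm = 1 - 4 * b + 8 * (b ^ 2 + c + 2 * c ^ 2 - 2 * b * c) := by
    rw [Zsqrtd.norm_def, hb, hc]
    ring
  rw [hnorm, IsTypeOne]
  lia

theorem IsPrimary.χ₈_norm {n : GaussianInt} (hn : IsPrimary n) :
    ZMod.χ₈ n.norm = if IsTypeOne n then 1 else -1 := by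
  have h4 := norm_emod_four_of_not_ωg_dvd hn.not_ωg_dvd
  rw [ZMod.χ₈_int_eq_if_mod_eight, if_neg (by lia)]
  exact if_congr (by rw [← hn.norm_emod_eight_eq_one_iff]; lia) rfl rfl

theorem five_le_norm_of_prime {ϖ : GaussianInt} (hϖ : Prime ϖ) (hodd : ¬ ωg ∣ ϖ) :
    5 ≤ ϖ.norm := by
  have h4 := norm_emod_four_of_not_ωg_dvd hodd
  have h0 := GaussianInt.norm_nonneg ϖ
  have h1 : ϖ.norm ≠ 1 := fun h => hϖ.not_isUnit ((Zsqrtd.norm_eq_one_iff' (by decide) ϖ).1 h)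
  lia

theorem eq_of_dvd_intCast_sub {ϖ : GaussianInt} (hϖ : 5 ≤ ϖ.norm) {x y : ℤ} (hx : |x| ≤ 1)
    (hy : |y| ≤ 1) (h : ϖ ∣ (x : GaussianInt) - y) : x = y := by
  have hnorm : ϖ.norm ∣ (x - y) * (x - y) := by
    rw [← Zsqrtd.norm_intCast (d := -1), Int.cast_sub]
    exact map_dvd Zsqrtd.normMonoidHom h
  rw [abs_le] at hx hy
  have hlt : |(x - y) * (x - y)| < ϖ.norm := by
    rw [abs_mul_self]
    nlinarith
  exact sub_eq_zero.1 (mul_self_eq_zero.1 (Int.eq_zero_of_abs_lt_dvd hnorm hlt))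

theorem χ₈_norm_of_isUnit {u : GaussianInt} (hu : IsUnit u) : ZMod.χ₈ u.norm = 1 := by
  rw [(Zsqrtd.norm_eq_one_iff' (by decide) u).2 hu, Int.cast_one, map_one]

theorem ig_pow_half_norm {m : GaussianInt} (hm : ¬ ωg ∣ m) :
    ig ^ ((m.norm.toNat - 1) / 2) = (ZMod.χ₈ m.norm : GaussianInt) := by
  have h0 := GaussianInt.norm_nonneg m
  have h4 := norm_emod_four_of_not_ωg_dvd hm
  have hig : ig ^ 4 = 1 := by decide
  rw [ZMod.χ₈_int_eq_if_mod_eight, pow_eq_pow_mod _ hig]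
  obtain h8 | h8 : m.norm % 8 = 1 ∨ m.norm % 8 = 5 := by lia
  · rw [show (m.norm.toNat - 1) / 2 % 4 = 0 by lia, if_neg (by lia), if_pos (Or.inl h8), pow_zero,
      Int.cast_one]
  · rw [show (m.norm.toNat - 1) / 2 % 4 = 2 by lia, if_neg (by lia), if_neg (by lia)]
    decide

namespace IsQuadSym

variable {χ : GaussianInt → GaussianInt → ℤ} {ϖ n : GaussianInt}

theorem abs_le_one (hχ : IsQuadSym χ) (hϖ : Prime ϖ) (hodd : ¬ ωg ∣ ϖ) (a : GaussianInt) :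
    |χ a ϖ| ≤ 1 := by
  by_cases ha : ϖ ∣ a
  · rw [hχ.zero_of_dvd ϖ a hϖ ha, abs_zero]
    exact zero_le_one
  · obtain h | h := (hχ.val_prime ϖ a hϖ hodd ha).1 <;> simp [h]

theorem dvd_pow_sub (hχ : IsQuadSym χ) (hϖ : Prime ϖ) (hodd : ¬ ωg ∣ ϖ) (a : GaussianInt) :
    ϖ ∣ a ^ ((ϖ.norm.toNat - 1) / 2) - χ a ϖ := by
  by_cases ha : ϖ ∣ a
  · have h5 := five_le_norm_of_prime hϖ hodd
    rw [hχ.zero_of_dvd ϖ a hϖ ha, Int.cast_zero, sub_zero]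
    exact dvd_pow ha (by lia)
  · exact (hχ.val_prime ϖ a hϖ hodd ha).2

theorem eq_of_dvd_pow_sub (hχ : IsQuadSym χ) {a : GaussianInt} (hϖ : Prime ϖ)
    (hodd : ¬ ωg ∣ ϖ) {y : ℤ} (hy : |y| ≤ 1) (h : ϖ ∣ a ^ ((ϖ.norm.toNat - 1) / 2) - y) :
    χ a ϖ = y := by
  refine eq_of_dvd_intCast_sub (five_le_norm_of_prime hϖ hodd) (hχ.abs_le_one hϖ hodd a) hy ?_
  rw [← sub_sub_sub_cancel_left]
  exact dvd_sub h (hχ.dvd_pow_sub hϖ hodd a)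

theorem congr_num (hχ : IsQuadSym χ) {a b : GaussianInt} (hn : ¬ ωg ∣ n) (h : n ∣ a - b) :
    χ a n = χ b n := by
  refine prime_factorization_induction_of_not_dvd (P := fun n => n ∣ a - b → χ a n = χ b n)
    (fun u hu _ => ?_) (fun ϖ m hϖ hodd hm ih hdvd => ?_) hn h
  · rw [hχ.unit_den a u hu, hχ.unit_den b u hu]
  · have hprime : χ a ϖ = χ b ϖ := by
      refine hχ.eq_of_dvd_pow_sub hϖ hodd (hχ.abs_le_one hϖ hodd b) ?_
      rw [← sub_add_sub_cancel]
      exact dvd_add ((dvd_of_mul_right_dvd hdvd).trans (sub_dvd_pow_sub_pow a b _))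
        (hχ.dvd_pow_sub hϖ hodd b)
    rw [hχ.mul_den a ϖ m hodd hm, hχ.mul_den b ϖ m hodd hm, hprime,
      ih (dvd_of_mul_left_dvd hdvd)]

theorem ig_mul (hχ : IsQuadSym χ) (hn : ¬ ωg ∣ n) (a : GaussianInt) :
    χ (ig * a) n = ZMod.χ₈ n.norm * χ a n := by
  refine prime_factorization_induction_of_not_dvd
    (P := fun n => χ (ig * a) n = ZMod.χ₈ n.norm * χ a n) (fun u hu => ?_)
    (fun ϖ m hϖ hodd hm ih => ?_) hn
  · rw [hχ.unit_den _ u hu, hχ.unit_den _ u hu, χ₈_norm_of_isUnit hu, one_mul]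
  · have hprime : χ (ig * a) ϖ = ZMod.χ₈ ϖ.norm * χ a ϖ := by
      refine hχ.eq_of_dvd_pow_sub hϖ hodd ?_ ?_
      · have hχ₈ : ∀ x : ZMod 8, |ZMod.χ₈ x| ≤ 1 := by decide
        rw [abs_mul]
        exact mul_le_one₀ (hχ₈ _) (abs_nonneg _) (hχ.abs_le_one hϖ hodd a)
      · rw [mul_pow, ig_pow_half_norm hodd, Int.cast_mul, ← mul_sub]
        exact (hχ.dvd_pow_sub hϖ hodd a).mul_left _
    rw [hχ.mul_den _ ϖ m hodd hm, hχ.mul_den _ ϖ m hodd hm, hprime, ih, Zsqrtd.norm_mul,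
      Int.cast_mul, map_mul]
    ring

end IsQuadSym

end QuadraticSymbol

section TwistedCharacter

theorem psi1_eq_zero_of_ωg_dvd {m : GaussianInt} (hm : ωg ∣ m) : psi1 m = 0 := by
  refine if_neg fun h => ?_
  have hunit : IsUnit ωg := h.isUnit_of_dvd' hm (ωg_dvd_iff.2 rfl)
  have hone : ((1 : GaussianInt).re + (1 : GaussianInt).im) % 2 = 0 := ωg_dvd_iff.1 hunit.dvd
  exact absurd hone (by decide)

theorem psi1_ig_mul (m : GaussianInt) : psi1 (ig * m) = psi1 m :=
  if_congr (isCoprime_mul_unit_left_left isUnit_ig m 2) rfl rfl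

theorem psi1_congr {a b : GaussianInt} (h : 2 ∣ a - b) : psi1 a = psi1 b := by
  obtain ⟨c, hc⟩ := h
  rw [eq_add_of_sub_eq' hc]
  exact if_congr IsCoprime.add_mul_left_left_iff rfl rfl

theorem psi2_eq (m : GaussianInt) : psi2 m =
    if m.re % 2 = 1 ∧ m.im % 2 = 0 then 1 else if m.re % 2 = 0 ∧ m.im % 2 = 1 then -1 else 0 := by
  have htwo (z : GaussianInt) : 2 ∣ z ↔ (2 ∣ z.re) ∧ 2 ∣ z.im := Zsqrtd.intCast_dvd 2 z
  refine if_congr ?_ rfl (if_congr ?_ rfl rfl) <;>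
    simp only [htwo, ig, Zsqrtd.re_sub, Zsqrtd.im_sub, Zsqrtd.re_one, Zsqrtd.im_one] <;> lia

theorem psi2_eq_zero_of_ωg_dvd {m : GaussianInt} (hm : ωg ∣ m) : psi2 m = 0 := by
  rw [ωg_dvd_iff] at hm
  rw [psi2_eq, if_neg (by lia), if_neg (by lia)]

theorem psi2_ig_mul (m : GaussianInt) : psi2 (ig * m) = -psi2 m := by
  simp only [psi2_eq, re_ig_mul, im_ig_mul]
  split_ifs <;> first | lia | simp

theorem psi2_congr {a b : GaussianInt} (h : 2 ∣ a - b) : psi2 a = psi2 b := by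
  have hcongr (c : GaussianInt) : 2 ∣ a - c ↔ 2 ∣ b - c :=
    dvd_iff_dvd_of_dvd_sub (by rwa [sub_sub_sub_cancel_right])
  exact if_congr (hcongr 1) rfl (if_congr (hcongr ig) rfl rfl)

theorem tchi_eq_zero_of_ωg_dvd (χ : GaussianInt → GaussianInt → ℤ) (n : GaussianInt)
    {m : GaussianInt} (hm : ωg ∣ m) : tchi χ n m = 0 := by
  rw [tchi, psi1_eq_zero_of_ωg_dvd hm, psi2_eq_zero_of_ωg_dvd hm, ite_self, zero_mul]

variable {χ : GaussianInt → GaussianInt → ℤ} {n : GaussianInt}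

theorem tchi_congr (hχ : IsQuadSym χ) (hn : ¬ ωg ∣ n) {a b : GaussianInt} (h : 2 * n ∣ a - b) :
    tchi χ n a = tchi χ n b := by
  have h2 : 2 ∣ a - b := dvd_of_mul_right_dvd h
  rw [tchi, tchi, psi1_congr h2, psi2_congr h2, hχ.congr_num hn (dvd_of_mul_left_dvd h)]

theorem tchi_ig_mul (hχ : IsQuadSym χ) (hn : IsPrimary n) (m : GaussianInt) :
    tchi χ n (ig * m) = tchi χ n m := by
  rw [tchi, tchi, hχ.ig_mul hn.not_ωg_dvd, hn.χ₈_norm, psi1_ig_mul, psi2_ig_mul]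
  split_ifs
  · rw [one_mul]
  · rw [neg_one_mul, Int.cast_neg, neg_mul_neg]

end TwistedCharacter

section FunctionalEquation

theorem tsum_tchi_div_Nm_cpow {χ : GaussianInt → GaussianInt → ℤ} (hχ : IsQuadSym χ)
    {n : GaussianInt} (hn : IsPrimary n) {s : ℂ} (hs : 1 < s.re) :
    ∑' m, tchi χ n m / (Nm m : ℂ) ^ s =
      4 * ∑' m : {m : GaussianInt // IsPrimary m}, tchi χ n m.1 / (Nm m.1 : ℂ) ^ s := by
  have hsum : Summable fun m => tchi χ n m / (Nm m : ℂ) ^ s :=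
    summable_div_Nm_cpow_of_periodic (mul_ne_zero two_ne_zero hn.ne_zero)
      (fun _ _ => tchi_congr hχ hn.not_ωg_dvd) hs
  have hunit : ∀ m, tchi χ n (ig * m) / (Nm (ig * m) : ℂ) ^ s = tchi χ n m / (Nm m : ℂ) ^ s :=
    fun m => by rw [tchi_ig_mul hχ hn, Nm_ig_mul]
  have heven : ∀ m, ωg ∣ m → tchi χ n m / (Nm m : ℂ) ^ s = 0 :=
    fun m hm => by rw [tchi_eq_zero_of_ωg_dvd χ n hm, zero_div]
  rw [(hasSum_four_nsmul_of_primary hunit heven (hsum.subtype IsPrimary).hasSum).tsum_eq,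
    nsmul_eq_mul, Nat.cast_ofNat]
  rfl

theorem functional_equation_tilde_chi_general
    (χ : GaussianInt → GaussianInt → ℤ) (hχ : IsQuadSym χ)
    (n : GaussianInt) (hn : IsPrimary n)
    (g : GaussianInt → ℂ) (hg : IsGaussSumChar (2 * n) (tchi χ n) g)
    (Lt : ℂ → ℂ)
    (hser : ∀ s : ℂ, 1 < s.re →
      Lt s = ∑' m : {m : GaussianInt // IsPrimary m}, tchi χ n m.1 / (Nm m.1 : ℂ) ^ s)
    (hdiff : DifferentiableOn ℂ Lt {s | s ≠ 1}) :
    ∀ s : ℂ, s.re < 0 →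
      Lt s = (Nm (2 * n) : ℂ) ^ (-s) * (Real.pi : ℂ) ^ (-(1 - 2 * s)) *
          (Complex.Gamma (1 - s) / (4 * Complex.Gamma s)) *
          ∑' k : {k : GaussianInt // k ≠ 0}, g k.1 / (Nm k.1 : ℂ) ^ (1 - s) := by
  intro s hs
  have hfull : ∀ s : ℂ, 1 < s.re → 4 * Lt s = ∑' m, tchi χ n m / (Nm m : ℂ) ^ s := fun s hs => by
    rw [hser s hs, tsum_tchi_div_Nm_cpow hχ hn hs]
  have hfeq := functionalEquation_of_periodic (mul_ne_zero two_ne_zero hn.ne_zero)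
    (fun _ _ => tchi_congr hχ hn.not_ωg_dvd) hg hfull (hdiff.const_mul 4) hs
  have hs1 : 1 - s ≠ 0 := sub_ne_zero.2 (by rintro rfl; norm_num at hs)
  rw [tsum_ne_zero_div_Nm_cpow g hs1]
  linear_combination hfeq / 4

end FunctionalEquation

/-- the functional equation of Proposition 2.3 of the paper.  For primary
non-square `n`, the Hecke `L`-function of `χ̃_n` (given by its Dirichlet series for
`Re s > 1` and entire) satisfies, on a half-plane where the Gauss-sum series converges
(hence as an identity of meromorphic functions),
`L(s, χ̃_n) = N(2n)^{−s} π^{−(1−2s)} (Γ(1−s)/(4Γ(s))) ∑_{k ≠ 0} g(k, χ̃_n)/N(k)^{1−s}`. -/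
theorem functional_equation_tilde_chi
    (χ : GaussianInt → GaussianInt → ℤ) (hχ : IsQuadSym χ)
    (n : GaussianInt) (hn : IsPrimary n) (hns : ¬ ∃ m : GaussianInt, n = m ^ 2)
    (g : GaussianInt → ℂ) (hg : IsGaussSumChar (2 * n) (tchi χ n) g)
    (Lt : ℂ → ℂ)
    (hser : ∀ s : ℂ, 1 < s.re →
      Lt s = ∑' m : {m : GaussianInt // IsPrimary m}, tchi χ n m.1 / (Nm m.1 : ℂ) ^ s)
    (hdiff : Differentiable ℂ Lt) :
    ∀ s : ℂ, s.re < 0 →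
      Lt s = (Nm (2 * n) : ℂ) ^ (-s) * (Real.pi : ℂ) ^ (-(1 - 2 * s)) *
          (Complex.Gamma (1 - s) / (4 * Complex.Gamma s)) *
          ∑' k : {k : GaussianInt // k ≠ 0}, g k.1 / (Nm k.1 : ℂ) ^ (1 - s) := by
  exact functional_equation_tilde_chi_general χ hχ n hn g hg Lt hser hdiff.differentiableOn
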